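/- arXiv:2012.11799 — 2 statements merged into one kernel-verified Lean document; each statement's English description precedes it below -/
import Mathlib

section
/- Hodge decomposition: the cochain space C^1 is the internal direct sum C^1 = im(d0) ⊕ ker(Δ1) ⊕ im(d1^*), and the three subspaces im(d0), ker(Δ1), im(d1^*) are pairwise orthogonal with respect to the weighted inner product ⟨·,·⟩_1. -/
open Matrix

/-- Data-driven coboundary `d_k := B_{k+1} δ_k B_k⁻¹`. -/
noncomputable def dd {m n : ℕ} (δ : Matrix (Fin m) (Fin n) ℝ)
    (bl : Fin n → ℝ) (bu : Fin m → ℝ) : Matrix (Fin m) (Fin n) ℝ :=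
  Matrix.diagonal bu * δ * (Matrix.diagonal bl)⁻¹

/-- Data-driven codifferential `d_k^* := D_k⁻¹ δ_kᵀ D_{k+1}`. -/
noncomputable def dds {m n : ℕ} (δ : Matrix (Fin m) (Fin n) ℝ)
    (dl : Fin n → ℝ) (du : Fin m → ℝ) : Matrix (Fin n) (Fin m) ℝ :=
  (Matrix.diagonal dl)⁻¹ * δ.transpose * Matrix.diagonal du

/-- Weighted inner product `⟨x, y⟩_k := xᵀ D_k B_k⁻¹ y` on `C^k`. -/
noncomputable def wip {n : ℕ} (dv bv : Fin n → ℝ) (x y : Fin n → ℝ) : ℝ :=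
  x ⬝ᵥ ((Matrix.diagonal dv * (Matrix.diagonal bv)⁻¹) *ᵥ y)

/-!
The discrete Hodge argument: `d₀^*` and `d₁^*` are the adjoints of `d₀` and `d₁` for the weighted
forms, so `⟨Δ₁ x, y⟩₁ = ⟨d₀^* x, d₀^* y⟩₀ + ⟨d₁ x, d₁ y⟩₂`. Positivity of the outer forms then
identifies `ker Δ₁` with the orthogonal complement of `im d₀ + im d₁^*`, where `im d₀` and
`im d₁^*` are orthogonal to each other because `d₁ d₀ = 0`. An anisotropic form on a
finite-dimensional space splits off the orthogonal complement of every subspace.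
-/

section LinearAlgebra

variable {R M : Type*}

lemma disjoint_orthogonal_of_anisotropic [CommRing R] [AddCommGroup M] [Module R M]
    {B : LinearMap.BilinForm R M} (hB : B.toQuadraticMap.Anisotropic) (U : Submodule R M) :
    Disjoint U (B.orthogonal U) :=
  Submodule.disjoint_def.mpr fun x hx hx' => hB x (hx' x hx)

lemma existsUnique_eq_add_add_of_isCompl [Ring R] [AddCommGroup M] [Module R M]
    {U V W : Submodule R M} (hU : IsCompl U (V ⊔ W)) (hVW : Disjoint V W) (x : M) :
    ∃! t : U × V × W, x = (t.1 : M) + (t.2.1 : M) + (t.2.2 : M) := by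
  let sum : U × V × W →ₗ[R] M := U.subtype.coprod (V.subtype.coprod W.subtype)
  have range_VW : LinearMap.range (V.subtype.coprod W.subtype) = V ⊔ W := by
    simp only [LinearMap.range_coprod, Submodule.range_subtype]
  have ker_VW : LinearMap.ker (V.subtype.coprod W.subtype) = ⊥ := by
    rw [LinearMap.ker_coprod_of_disjoint_range] <;> simp [hVW]
  have injective : Function.Injective sum := by
    rw [← LinearMap.ker_eq_bot, LinearMap.ker_coprod_of_disjoint_range, ker_VW,
      Submodule.ker_subtype, Submodule.prod_bot]
    rw [range_VW, Submodule.range_subtype]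
    exact hU.disjoint
  have surjective : Function.Surjective sum := by
    rw [← LinearMap.range_eq_top, LinearMap.range_coprod, range_VW, Submodule.range_subtype,
      hU.sup_eq_top]
  simpa [sum, add_assoc, eq_comm] using Function.Bijective.existsUnique ⟨injective, surjective⟩ x

end LinearAlgebra

section HodgeLaplacian

variable {R V₀ V₁ V₂ : Type*} [CommRing R]
  [AddCommGroup V₀] [Module R V₀] [AddCommGroup V₁] [Module R V₁] [AddCommGroup V₂] [Module R V₂]

/-- The Hodge Laplacian in the middle degree of a three-term sequence `V₀ → V₁ → V₂` with maps
`d₀`, `d₁`. The codifferentials `d₀'`, `d₁'` are arbitrary maps in the opposite direction; that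
they are adjoint to `d₀`, `d₁` is a hypothesis of the results below. -/
def hodgeLaplacian (d₀ : V₀ →ₗ[R] V₁) (d₀' : V₁ →ₗ[R] V₀) (d₁ : V₁ →ₗ[R] V₂)
    (d₁' : V₂ →ₗ[R] V₁) : Module.End R V₁ :=
  d₀ ∘ₗ d₀' + d₁' ∘ₗ d₁

variable {d₀ : V₀ →ₗ[R] V₁} {d₀' : V₁ →ₗ[R] V₀} {d₁ : V₁ →ₗ[R] V₂} {d₁' : V₂ →ₗ[R] V₁}
  {B₀ : LinearMap.BilinForm R V₀} {B₁ : LinearMap.BilinForm R V₁} {B₂ : LinearMap.BilinForm R V₂}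

lemma hodgeLaplacian_form_apply (hB₁ : B₁.IsSymm) (hB₂ : B₂.IsSymm)
    (adj₀ : LinearMap.IsAdjointPair B₀ B₁ d₀ d₀') (adj₁ : LinearMap.IsAdjointPair B₁ B₂ d₁ d₁')
    (x y : V₁) :
    B₁ (hodgeLaplacian d₀ d₀' d₁ d₁' x) y = B₀ (d₀' x) (d₀' y) + B₂ (d₁ x) (d₁ y) :=
  calc B₁ (hodgeLaplacian d₀ d₀' d₁ d₁' x) y = B₁ (d₀ (d₀' x)) y + B₁ (d₁' (d₁ x)) y := by
        simp only [hodgeLaplacian, LinearMap.add_apply, LinearMap.comp_apply, map_add]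
    _ = B₀ (d₀' x) (d₀' y) + B₂ (d₁ x) (d₁ y) := by
        rw [adj₀, hB₁.eq, ← adj₁, hB₂.eq]

lemma hodgeLaplacian_form_symm (hB₀ : B₀.IsSymm) (hB₁ : B₁.IsSymm) (hB₂ : B₂.IsSymm)
    (adj₀ : LinearMap.IsAdjointPair B₀ B₁ d₀ d₀') (adj₁ : LinearMap.IsAdjointPair B₁ B₂ d₁ d₁')
    (x y : V₁) :
    B₁ (hodgeLaplacian d₀ d₀' d₁ d₁' x) y = B₁ x (hodgeLaplacian d₀ d₀' d₁ d₁' y) := by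
  rw [hB₁.eq x, hodgeLaplacian_form_apply hB₁ hB₂ adj₀ adj₁,
    hodgeLaplacian_form_apply hB₁ hB₂ adj₀ adj₁, hB₀.eq, hB₂.eq]

lemma range_hodgeLaplacian_le :
    LinearMap.range (hodgeLaplacian d₀ d₀' d₁ d₁') ≤ LinearMap.range d₀ ⊔ LinearMap.range d₁' := by
  rintro _ ⟨x, rfl⟩
  exact Submodule.add_mem_sup ⟨d₀' x, rfl⟩ ⟨d₁ x, rfl⟩

lemma range_codifferential_le_orthogonal (hd : d₁ ∘ₗ d₀ = 0)
    (adj₁ : LinearMap.IsAdjointPair B₁ B₂ d₁ d₁') :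
    LinearMap.range d₁' ≤ B₁.orthogonal (LinearMap.range d₀) := by
  rintro _ ⟨z, rfl⟩ _ ⟨x, rfl⟩
  change B₁ (d₀ x) (d₁' z) = 0
  have d₁_d₀ : d₁ (d₀ x) = 0 := LinearMap.congr_fun hd x
  rw [← adj₁, d₁_d₀, map_zero, LinearMap.zero_apply]

lemma orthogonal_le_ker_hodgeLaplacian (hB₀ : B₀.IsSymm) (hB₁ : B₁.IsSymm)
    (hB₁' : B₁.SeparatingLeft) (hB₂ : B₂.IsSymm)
    (adj₀ : LinearMap.IsAdjointPair B₀ B₁ d₀ d₀') (adj₁ : LinearMap.IsAdjointPair B₁ B₂ d₁ d₁') :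
    B₁.orthogonal (LinearMap.range d₀ ⊔ LinearMap.range d₁') ≤
      LinearMap.ker (hodgeLaplacian d₀ d₀' d₁ d₁') := by
  refine fun y hy => LinearMap.mem_ker.mpr (hB₁' _ fun v => ?_)
  rw [hodgeLaplacian_form_symm hB₀ hB₁ hB₂ adj₀ adj₁, ← hB₁.eq]
  exact hy _ (range_hodgeLaplacian_le ⟨v, rfl⟩)

section Ordered

variable [LinearOrder R] [IsStrictOrderedRing R]

lemma mem_ker_form_of_mem_ker_hodgeLaplacian (hB₀ : B₀.IsPosSemidef) (hB₁ : B₁.IsSymm)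
    (hB₂ : B₂.IsPosSemidef) (adj₀ : LinearMap.IsAdjointPair B₀ B₁ d₀ d₀')
    (adj₁ : LinearMap.IsAdjointPair B₁ B₂ d₁ d₁') {y : V₁}
    (hy : y ∈ LinearMap.ker (hodgeLaplacian d₀ d₀' d₁ d₁')) :
    d₀' y ∈ LinearMap.ker B₀ ∧ d₁ y ∈ LinearMap.ker B₂ := by
  have energy : B₀ (d₀' y) (d₀' y) + B₂ (d₁ y) (d₁ y) = 0 := by
    rw [← hodgeLaplacian_form_apply hB₁ hB₂.isSymm adj₀ adj₁, LinearMap.mem_ker.mp hy, map_zero,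
      LinearMap.zero_apply]
  rw [add_eq_zero_iff_of_nonneg (hB₀.nonneg _) (hB₂.nonneg _)] at energy
  exact energy.imp (B₀.apply_apply_same_eq_zero_iff hB₀.nonneg
      (LinearMap.BilinForm.isSymm_iff.mp hB₀.isSymm)).mp
    (B₂.apply_apply_same_eq_zero_iff hB₂.nonneg
      (LinearMap.BilinForm.isSymm_iff.mp hB₂.isSymm)).mp

lemma ker_hodgeLaplacian_le_orthogonal (hB₀ : B₀.IsPosSemidef) (hB₁ : B₁.IsSymm)
    (hB₂ : B₂.IsPosSemidef) (adj₀ : LinearMap.IsAdjointPair B₀ B₁ d₀ d₀')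
    (adj₁ : LinearMap.IsAdjointPair B₁ B₂ d₁ d₁') :
    LinearMap.ker (hodgeLaplacian d₀ d₀' d₁ d₁') ≤
      B₁.orthogonal (LinearMap.range d₀ ⊔ LinearMap.range d₁') := by
  intro y hy v hv
  obtain ⟨hy₀, hy₂⟩ := mem_ker_form_of_mem_ker_hodgeLaplacian hB₀ hB₁ hB₂ adj₀ adj₁ hy
  obtain ⟨_, ⟨x, rfl⟩, _, ⟨z, rfl⟩, rfl⟩ := Submodule.mem_sup.mp hv
  have ortho₀ : B₁ (d₀ x) y = 0 := by
    rw [adj₀, ← hB₀.isSymm.eq, LinearMap.mem_ker.mp hy₀, LinearMap.zero_apply]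
  have ortho₂ : B₁ (d₁' z) y = 0 := by
    rw [← hB₁.eq, ← adj₁, LinearMap.mem_ker.mp hy₂, LinearMap.zero_apply]
  rw [map_add, LinearMap.add_apply, ortho₀, ortho₂, add_zero]

theorem ker_hodgeLaplacian_eq_orthogonal (hB₀ : B₀.IsPosSemidef) (hB₁ : B₁.IsSymm)
    (hB₁' : B₁.SeparatingLeft) (hB₂ : B₂.IsPosSemidef)
    (adj₀ : LinearMap.IsAdjointPair B₀ B₁ d₀ d₀') (adj₁ : LinearMap.IsAdjointPair B₁ B₂ d₁ d₁') :
    LinearMap.ker (hodgeLaplacian d₀ d₀' d₁ d₁') =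
      B₁.orthogonal (LinearMap.range d₀ ⊔ LinearMap.range d₁') :=
  (ker_hodgeLaplacian_le_orthogonal hB₀ hB₁ hB₂ adj₀ adj₁).antisymm
    (orthogonal_le_ker_hodgeLaplacian hB₀.isSymm hB₁ hB₁' hB₂.isSymm adj₀ adj₁)

end Ordered

end HodgeLaplacian

lemma mulVecLin_hodgeLaplacian {R ι₀ ι₁ ι₂ : Type*} [CommRing R] [Fintype ι₀] [Fintype ι₁]
    [Fintype ι₂] (A : Matrix ι₁ ι₀ R) (A' : Matrix ι₀ ι₁ R) (E : Matrix ι₂ ι₁ R)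
    (E' : Matrix ι₁ ι₂ R) :
    (A * A' + E' * E).mulVecLin =
      hodgeLaplacian A.mulVecLin A'.mulVecLin E.mulVecLin E'.mulVecLin := by
  rw [Matrix.mulVecLin_add, Matrix.mulVecLin_mul, Matrix.mulVecLin_mul, hodgeLaplacian]

theorem existsUnique_hodge_decomposition {K V₀ V₁ V₂ : Type*} [Field K] [LinearOrder K]
    [IsStrictOrderedRing K] [AddCommGroup V₀] [Module K V₀] [AddCommGroup V₁] [Module K V₁]
    [FiniteDimensional K V₁] [AddCommGroup V₂] [Module K V₂]
    {d₀ : V₀ →ₗ[K] V₁} {d₀' : V₁ →ₗ[K] V₀} {d₁ : V₁ →ₗ[K] V₂} {d₁' : V₂ →ₗ[K] V₁}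
    {B₀ : LinearMap.BilinForm K V₀} {B₁ : LinearMap.BilinForm K V₁}
    {B₂ : LinearMap.BilinForm K V₂}
    (hB₀ : B₀.IsPosSemidef) (hB₁ : B₁.IsSymm) (hB₁' : B₁.toQuadraticMap.Anisotropic)
    (hB₂ : B₂.IsPosSemidef) (adj₀ : LinearMap.IsAdjointPair B₀ B₁ d₀ d₀')
    (adj₁ : LinearMap.IsAdjointPair B₁ B₂ d₁ d₁') (hd : d₁ ∘ₗ d₀ = 0) (u : V₁) :
    ∃! t : LinearMap.range d₀ × LinearMap.ker (hodgeLaplacian d₀ d₀' d₁ d₁') ×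
        LinearMap.range d₁',
      u = (t.1 : V₁) + (t.2.1 : V₁) + (t.2.2 : V₁) := by
  have ranges_disjoint : Disjoint (LinearMap.range d₀) (LinearMap.range d₁') :=
    (disjoint_orthogonal_of_anisotropic hB₁' _).mono_right
      (range_codifferential_le_orthogonal hd adj₁)
  have compl : IsCompl (LinearMap.range d₀ ⊔ LinearMap.range d₁')
      (LinearMap.ker (hodgeLaplacian d₀ d₀' d₁ d₁')) := by
    rw [ker_hodgeLaplacian_eq_orthogonal hB₀ hB₁ (fun x hx => hB₁' x (hx x)) hB₂ adj₀ adj₁,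
      LinearMap.BilinForm.isCompl_orthogonal_iff_disjoint hB₁.isRefl]
    exact disjoint_orthogonal_of_anisotropic hB₁' _
  refine existsUnique_eq_add_add_of_isCompl ?_ (compl.disjoint.symm.mono_right le_sup_right) u
  rw [sup_comm]
  exact ranges_disjoint.isCompl_sup_right_of_isCompl_sup_left compl

section Diagonal

variable {ι R : Type*} [Fintype ι] [DecidableEq ι]

lemma commute_diagonal_inv_diagonal [CommRing R] (a b : ι → R) :
    Commute (diagonal a) (diagonal b)⁻¹ := by
  rw [Matrix.inv_diagonal]
  exact Matrix.commute_diagonal a _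

variable [Field R] {b : ι → R}

lemma isUnit_det_diagonal (hb : ∀ i, b i ≠ 0) : IsUnit (diagonal b).det := by
  rw [Matrix.det_diagonal, isUnit_iff_ne_zero]
  exact Finset.prod_ne_zero_iff.mpr fun i _ => hb i

lemma diagonal_mul_inv_diagonal (a : ι → R) (hb : ∀ i, b i ≠ 0) :
    diagonal a * (diagonal b)⁻¹ = diagonal (a / b) := by
  have factor : diagonal (a / b) * diagonal b = diagonal a := by
    rw [Matrix.diagonal_mul_diagonal]
    exact congrArg diagonal (funext fun i => div_mul_cancel₀ (a i) (hb i))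
  rw [← factor, Matrix.mul_nonsing_inv_cancel_right _ _ (isUnit_det_diagonal hb)]

end Diagonal

section WeightedCochains

variable {m n : ℕ}

/-- The weighted inner product `wip` as a bilinear form on `C^k`. -/
noncomputable def wipForm (dv bv : Fin n → ℝ) : LinearMap.BilinForm ℝ (Fin n → ℝ) :=
  Matrix.toBilin' (diagonal dv * (diagonal bv)⁻¹)

lemma wipForm_apply (dv bv x y : Fin n → ℝ) : wipForm dv bv x y = wip dv bv x y :=
  Matrix.toBilin'_apply' _ x y

lemma wipForm_isSymm (dv bv : Fin n → ℝ) : (wipForm dv bv).IsSymm := by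
  rw [wipForm, Matrix.isSymm_toBilin'_iff_isSymm, Matrix.inv_diagonal,
    Matrix.diagonal_mul_diagonal]
  exact Matrix.isSymm_diagonal _

lemma wipForm_self {bv : Fin n → ℝ} (hb : ∀ i, bv i ≠ 0) (dv x : Fin n → ℝ) :
    wipForm dv bv x x = ∑ i, dv i / bv i * x i ^ 2 := by
  rw [wipForm, diagonal_mul_inv_diagonal dv hb, Matrix.toBilin'_apply', dotProduct]
  refine Finset.sum_congr rfl fun i _ => ?_
  rw [Matrix.mulVec_diagonal, Pi.div_apply]
  ring

lemma wipForm_isPosSemidef {dv bv : Fin n → ℝ} (hb : ∀ i, bv i ≠ 0) (hw : ∀ i, 0 ≤ dv i / bv i) :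
    (wipForm dv bv).IsPosSemidef where
  eq := (wipForm_isSymm dv bv).eq
  nonneg x := by
    rw [wipForm_self hb]
    exact Finset.sum_nonneg fun i _ => mul_nonneg (hw i) (sq_nonneg _)

lemma wipForm_anisotropic {dv bv : Fin n → ℝ} (hw : ∀ i, 0 < dv i / bv i) :
    (wipForm dv bv).toQuadraticMap.Anisotropic := by
  have hb (i) : bv i ≠ 0 := (div_ne_zero_iff.mp (hw i).ne').2
  intro x hx
  rw [LinearMap.BilinMap.toQuadraticMap_apply, wipForm_self hb,
    Finset.sum_eq_zero_iff_of_nonneg fun i _ => mul_nonneg (hw i).le (sq_nonneg _)] at hx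
  funext i
  simpa [(hw i).ne'] using hx i (Finset.mem_univ i)

lemma dd_dds_isAdjointPair (δ : Matrix (Fin m) (Fin n) ℝ) (bl : Fin n → ℝ) {bu : Fin m → ℝ}
    (hbu : ∀ i, bu i ≠ 0) {dl : Fin n → ℝ} (hdl : ∀ i, dl i ≠ 0) (du : Fin m → ℝ) :
    LinearMap.IsAdjointPair (wipForm dl bl) (wipForm du bu)
      (dd δ bl bu).mulVecLin (dds δ dl du).mulVecLin := by
  refine (isAdjointPair_toLinearMap₂' _ _ _ _).mpr ?_
  calc (dd δ bl bu)ᵀ * (diagonal du * (diagonal bu)⁻¹)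
      = (diagonal bl)⁻¹ * δᵀ * diagonal bu * ((diagonal bu)⁻¹ * diagonal du) := by
        rw [dd, (commute_diagonal_inv_diagonal du bu).eq]
        simp only [Matrix.transpose_mul, Matrix.diagonal_transpose, Matrix.transpose_nonsing_inv,
          Matrix.mul_assoc]
    _ = (diagonal bl)⁻¹ * (δᵀ * diagonal du) := by
        rw [← Matrix.mul_assoc, Matrix.mul_nonsing_inv_cancel_right _ _ (isUnit_det_diagonal hbu),
          Matrix.mul_assoc]
    _ = (diagonal bl)⁻¹ * diagonal dl * ((diagonal dl)⁻¹ * (δᵀ * diagonal du)) := by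
        rw [Matrix.mul_assoc, Matrix.mul_nonsing_inv_cancel_left _ _ (isUnit_det_diagonal hdl)]
    _ = diagonal dl * (diagonal bl)⁻¹ * dds δ dl du := by
        rw [dds, (commute_diagonal_inv_diagonal dl bl).eq, Matrix.mul_assoc (diagonal dl)⁻¹]

lemma dd_mul_dd {p : ℕ} (δ₁ : Matrix (Fin p) (Fin m) ℝ) (δ₀ : Matrix (Fin m) (Fin n) ℝ)
    (b₀ : Fin n → ℝ) {b₁ : Fin m → ℝ} (hb₁ : ∀ i, b₁ i ≠ 0) (b₂ : Fin p → ℝ) :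
    dd δ₁ b₁ b₂ * dd δ₀ b₀ b₁ = dd (δ₁ * δ₀) b₀ b₂ := by
  simp only [dd, Matrix.mul_assoc,
    Matrix.nonsing_inv_mul_cancel_left _ _ (isUnit_det_diagonal hb₁)]

end WeightedCochains

theorem ddec_hodge_decomposition_general {n0 n1 n2 : ℕ}
    {δ0 : Matrix (Fin n1) (Fin n0) ℝ} {δ1 : Matrix (Fin n2) (Fin n1) ℝ} (hδ : δ1 * δ0 = 0)
    {bv0 : Fin n0 → ℝ} {bv1 : Fin n1 → ℝ} {bv2 : Fin n2 → ℝ} (hb2 : ∀ i, bv2 i ≠ 0)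
    {dv0 : Fin n0 → ℝ} {dv1 : Fin n1 → ℝ} {dv2 : Fin n2 → ℝ}
    (hw0 : ∀ i, 0 < dv0 i / bv0 i) (hw1 : ∀ i, 0 < dv1 i / bv1 i)
    (hw2 : ∀ i, 0 ≤ dv2 i / bv2 i) :
    (∀ u : Fin n1 → ℝ,
      ∃! t : LinearMap.range (dd δ0 bv0 bv1).mulVecLin ×
             LinearMap.ker ((dd δ0 bv0 bv1 * dds δ0 dv0 dv1 +
               dds δ1 dv1 dv2 * dd δ1 bv1 bv2).mulVecLin) ×
             LinearMap.range (dds δ1 dv1 dv2).mulVecLin,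
        u = (t.1 : Fin n1 → ℝ) + (t.2.1 : Fin n1 → ℝ) + (t.2.2 : Fin n1 → ℝ)) ∧
    (∀ x ∈ LinearMap.range (dd δ0 bv0 bv1).mulVecLin,
      ∀ y ∈ LinearMap.ker ((dd δ0 bv0 bv1 * dds δ0 dv0 dv1 +
               dds δ1 dv1 dv2 * dd δ1 bv1 bv2).mulVecLin),
        wip dv1 bv1 x y = 0) ∧
    (∀ x ∈ LinearMap.range (dd δ0 bv0 bv1).mulVecLin,
      ∀ z ∈ LinearMap.range (dds δ1 dv1 dv2).mulVecLin,
        wip dv1 bv1 x z = 0) ∧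
    (∀ y ∈ LinearMap.ker ((dd δ0 bv0 bv1 * dds δ0 dv0 dv1 +
               dds δ1 dv1 dv2 * dd δ1 bv1 bv2).mulVecLin),
      ∀ z ∈ LinearMap.range (dds δ1 dv1 dv2).mulVecLin,
        wip dv1 bv1 y z = 0) := by
  have hb0 (i) : bv0 i ≠ 0 := (div_ne_zero_iff.mp (hw0 i).ne').2
  have hb1 (i) : bv1 i ≠ 0 := (div_ne_zero_iff.mp (hw1 i).ne').2
  have adj₀ := dd_dds_isAdjointPair δ0 bv0 hb1 (fun i => (div_ne_zero_iff.mp (hw0 i).ne').1) dv1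
  have adj₁ := dd_dds_isAdjointPair δ1 bv1 hb2 (fun i => (div_ne_zero_iff.mp (hw1 i).ne').1) dv2
  have hB₀ := wipForm_isPosSemidef hb0 fun i => (hw0 i).le
  have hB₁ := wipForm_isSymm dv1 bv1
  have hB₂ := wipForm_isPosSemidef hb2 hw2
  have hd : (dd δ1 bv1 bv2).mulVecLin ∘ₗ (dd δ0 bv0 bv1).mulVecLin = 0 := by
    rw [← Matrix.mulVecLin_mul, dd_mul_dd δ1 δ0 bv0 hb1, hδ]
    simp [dd]
  have harmonic_ortho := ker_hodgeLaplacian_le_orthogonal hB₀ hB₁ hB₂ adj₀ adj₁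
  rw [mulVecLin_hodgeLaplacian]
  refine ⟨existsUnique_hodge_decomposition hB₀ hB₁ (wipForm_anisotropic hw1) hB₂ adj₀ adj₁ hd,
    fun x hx y hy => ?_, fun x hx z hz => ?_, fun y hy z hz => ?_⟩ <;> rw [← wipForm_apply]
  · exact harmonic_ortho hy x (Submodule.mem_sup_left hx)
  · exact range_codifferential_le_orthogonal hd adj₁ hz x hx
  · rw [← hB₁.eq]
    exact harmonic_ortho hy z (Submodule.mem_sup_right hz)

/-- Hodge decomposition: `C^1 = im(d0) ⊕ ker(Δ1) ⊕ im(d1^*)`, an internal direct sum (every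
`u ∈ C^1` decomposes uniquely as a sum of elements of the three subspaces), and the three
subspaces are pairwise orthogonal with respect to the weighted inner product `⟨·,·⟩_1`. -/
theorem ddec_hodge_decomposition
    (n0 n1 n2 : ℕ) (hn0 : 0 < n0) (hn1 : 0 < n1) (hn2 : 0 < n2)
    (δ0 : Matrix (Fin n1) (Fin n0) ℝ) (δ1 : Matrix (Fin n2) (Fin n1) ℝ)
    (hδ : δ1 * δ0 = 0)
    (bv0 : Fin n0 → ℝ) (bv1 : Fin n1 → ℝ) (bv2 : Fin n2 → ℝ)
    (hb0 : ∀ i, 0 < bv0 i) (hb1 : ∀ i, 0 < bv1 i) (hb2 : ∀ i, 0 < bv2 i)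
    (dv0 : Fin n0 → ℝ) (dv1 : Fin n1 → ℝ) (dv2 : Fin n2 → ℝ)
    (hd0 : ∀ i, 0 < dv0 i) (hd1 : ∀ i, 0 < dv1 i) (hd2 : ∀ i, 0 < dv2 i)
    :
    (∀ u : Fin n1 → ℝ,
      ∃! t : LinearMap.range (dd δ0 bv0 bv1).mulVecLin ×
             LinearMap.ker ((dd δ0 bv0 bv1 * dds δ0 dv0 dv1 +
               dds δ1 dv1 dv2 * dd δ1 bv1 bv2).mulVecLin) ×
             LinearMap.range (dds δ1 dv1 dv2).mulVecLin,
        u = (t.1 : Fin n1 → ℝ) + (t.2.1 : Fin n1 → ℝ) + (t.2.2 : Fin n1 → ℝ)) ∧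
    (∀ x ∈ LinearMap.range (dd δ0 bv0 bv1).mulVecLin,
      ∀ y ∈ LinearMap.ker ((dd δ0 bv0 bv1 * dds δ0 dv0 dv1 +
               dds δ1 dv1 dv2 * dd δ1 bv1 bv2).mulVecLin),
        wip dv1 bv1 x y = 0) ∧
    (∀ x ∈ LinearMap.range (dd δ0 bv0 bv1).mulVecLin,
      ∀ z ∈ LinearMap.range (dds δ1 dv1 dv2).mulVecLin,
        wip dv1 bv1 x z = 0) ∧
    (∀ y ∈ LinearMap.ker ((dd δ0 bv0 bv1 * dds δ0 dv0 dv1 +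
               dds δ1 dv1 dv2 * dd δ1 bv1 bv2).mulVecLin),
      ∀ z ∈ LinearMap.range (dds δ1 dv1 dv2).mulVecLin,
        wip dv1 bv1 y z = 0) := by
  exact ddec_hodge_decomposition_general hδ (fun i => (hb2 i).ne')
    (fun i => div_pos (hd0 i) (hb0 i)) (fun i => div_pos (hd1 i) (hb1 i))
    fun i => (div_pos (hd2 i) (hb2 i)).le
end

section
/- Well-posedness of the nonlinearly perturbed problem: there exists a unique u ∈ V such that a(u, v) + ε ⟨N(G u), G v⟩ = F(v) for all v ∈ V, and this solution satisfies ‖u‖_a ≤ ‖F‖_{-a} / (1 − εL), where ‖F‖_{-a} := sup { F(v) : v ∈ V, ‖v‖_a = 1 } is the dual norm of F. -/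
open RealInnerProductSpace

/-!
By the Riesz isometry `R : V* → V`, the equation `a(u, ·) + Φ(u) = F` says that `u` is a fixed point
of `u ↦ R (F - Φ(u))`, which contracts as soon as `Φ : V → V*` is Lipschitz with constant less
than `1`. For `Φ(u) = ε ⟨N(G u), G ·⟩` the constant is `εL`, because `G` is a contraction. The bound
follows from `‖u‖ = ‖F - Φ(u)‖ ≤ ‖F‖ + εL ‖u‖`.
-/

open scoped NNReal

section LipschitzPerturbation

variable {𝕜 V : Type*} [RCLike 𝕜] [NormedAddCommGroup V] [InnerProductSpace 𝕜 V]

theorem existsUnique_forall_inner_add_eq [CompleteSpace V] {Φ : V → StrongDual 𝕜 V} {K : ℝ≥0}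
    (hΦ : LipschitzWith K Φ) (hK : K < 1) (F : StrongDual 𝕜 V) :
    ∃! u : V, ∀ v : V, inner 𝕜 u v + Φ u v = F v := by
  let T : V → V := fun u ↦ (InnerProductSpace.toDual 𝕜 V).symm (F - Φ u)
  have hT : ContractingWith K T := by
    refine ⟨hK, LipschitzWith.of_dist_le_mul fun x y ↦ ?_⟩
    simpa only [T, LinearIsometryEquiv.dist_map, dist_sub_left] using hΦ.dist_le_mul x y
  have solution_iff_isFixedPt (u : V) :
      (∀ v, inner 𝕜 u v + Φ u v = F v) ↔ Function.IsFixedPt T u := by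
    rw [Function.IsFixedPt, eq_comm, LinearIsometryEquiv.eq_symm_apply, eq_sub_iff_add_eq,
      ContinuousLinearMap.ext_iff]
    rfl
  simp only [solution_iff_isFixedPt]
  exact ⟨hT.fixedPoint T, hT.fixedPoint_isFixedPt, fun _ ↦ hT.fixedPoint_unique⟩

theorem norm_le_div_of_forall_inner_add_eq {F φ : StrongDual 𝕜 V} {u : V} {K : ℝ}
    (hφ : ‖φ‖ ≤ K * ‖u‖) (hK : K < 1) (hu : ∀ v : V, inner 𝕜 u v + φ v = F v) :
    ‖u‖ ≤ ‖F‖ / (1 - K) := by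
  have inner_eq : innerSL 𝕜 u = F - φ := by
    ext v
    exact eq_sub_of_add_eq (hu v)
  have norm_le : ‖u‖ ≤ ‖F‖ + K * ‖u‖ :=
    calc ‖u‖ = ‖F - φ‖ := by rw [← inner_eq, innerSL_apply_norm]
      _ ≤ ‖F‖ + ‖φ‖ := norm_sub_le F φ
      _ ≤ ‖F‖ + K * ‖u‖ := by gcongr
  rw [le_div_iff₀ (sub_pos.2 hK)]
  linarith

end LipschitzPerturbation

section WeakPullback

variable {𝕜 V W : Type*} [RCLike 𝕜]
  [NormedAddCommGroup V] [NormedSpace 𝕜 V] [NormedAddCommGroup W] [InnerProductSpace 𝕜 W]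

/-- The nonlinear operator `u ↦ ⟨N(G u), G ·⟩`, that is, `G* ∘ N ∘ G` in weak form. Taking
values in the dual of `V` avoids the adjoint `G*`. -/
noncomputable def weakPullback (G : V →L[𝕜] W) (N : W → W) (u : V) : StrongDual 𝕜 V :=
  (innerSL 𝕜 (N (G u))).comp G

theorem weakPullback_apply (G : V →L[𝕜] W) (N : W → W) (u v : V) :
    weakPullback G N u v = inner 𝕜 (N (G u)) (G v) :=
  rfl

theorem weakPullback_zero (G : V →L[𝕜] W) {N : W → W} (hN : N 0 = 0) :
    weakPullback G N 0 = 0 := by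
  ext v
  simp [weakPullback_apply, hN]

theorem lipschitzWith_weakPullback (G : V →L[𝕜] W) {N : W → W} {L : ℝ≥0} (hN : LipschitzWith L N) :
    LipschitzWith (L * ‖G‖₊ ^ 2) (weakPullback G N) := by
  refine LipschitzWith.of_dist_le_mul fun x y ↦ ?_
  have sub_eq : weakPullback G N x - weakPullback G N y =
      (innerSL 𝕜 (N (G x) - N (G y))).comp G := by
    simp only [weakPullback, map_sub, ContinuousLinearMap.sub_comp]
  calc dist (weakPullback G N x) (weakPullback G N y)
      = ‖(innerSL 𝕜 (N (G x) - N (G y))).comp G‖ := by rw [dist_eq_norm, sub_eq]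
    _ ≤ ‖innerSL 𝕜 (N (G x) - N (G y))‖ * ‖G‖ := ContinuousLinearMap.opNorm_comp_le _ _
    _ = dist (N (G x)) (N (G y)) * ‖G‖ := by rw [innerSL_apply_norm, dist_eq_norm]
    _ ≤ L * (‖G‖ * dist x y) * ‖G‖ := by
      gcongr
      exact (hN.dist_le_mul _ _).trans (by gcongr; exact G.lipschitz.dist_le_mul x y)
    _ = ↑(L * ‖G‖₊ ^ 2) * dist x y := by push_cast; ring

end WeakPullback

theorem perturbed_hodge_laplacian_well_posed_general
    {𝕜 V W : Type*} [RCLike 𝕜]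
    [NormedAddCommGroup V] [InnerProductSpace 𝕜 V] [CompleteSpace V]
    [NormedAddCommGroup W] [InnerProductSpace 𝕜 W]
    (G : V →ₗ[𝕜] W) (hG : ∀ v : V, ‖G v‖ ≤ ‖v‖)
    (N : W → W) (L : ℝ) (hL : 0 ≤ L)
    (hNLip : ∀ w1 w2 : W, ‖N w1 - N w2‖ ≤ L * ‖w1 - w2‖)
    (hN0 : N 0 = 0)
    (ε : 𝕜) (hεL : ‖ε‖ * L < 1)
    (F : V →L[𝕜] 𝕜) :
    (∃! u : V, ∀ v : V, inner 𝕜 u v + ε * inner 𝕜 (N (G u)) (G v) = F v) ∧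
    (∀ u : V, (∀ v : V, inner 𝕜 u v + ε * inner 𝕜 (N (G u)) (G v) = F v) →
      ‖u‖ ≤ ‖F‖ / (1 - ‖ε‖ * L)) := by
  lift L to ℝ≥0 using hL
  let G' : V →L[𝕜] W := G.mkContinuous 1 (by simpa only [one_mul] using hG)
  have norm_G' : ‖G'‖₊ ≤ 1 := G.mkContinuous_norm_le zero_le_one _
  have lipschitz_N : LipschitzWith L N :=
    LipschitzWith.of_dist_le_mul fun w₁ w₂ ↦ by simpa only [dist_eq_norm] using hNLip w₁ w₂
  -- `star ε`, as the inner product is conjugate-linear in its first argument.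
  let Φ : V → StrongDual 𝕜 V := weakPullback G' (star ε • N)
  have Φ_apply (u v : V) : ε * inner 𝕜 (N (G u)) (G v) = Φ u v := by
    simp [Φ, G', weakPullback_apply, inner_smul_left]
  have lipschitz_smul_N : LipschitzWith (‖ε‖₊ * L) (star ε • N) := by
    rw [← nnnorm_star ε]
    exact (lipschitzWith_smul (star ε)).comp lipschitz_N
  have lipschitz_Φ : LipschitzWith (‖ε‖₊ * L) Φ :=
    (lipschitzWith_weakPullback G' lipschitz_smul_N).weaken <|
      mul_le_of_le_one_right' (pow_le_one' norm_G' 2)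
  have Φ_zero : Φ 0 = 0 := weakPullback_zero G' (by simp [hN0])
  simp only [Φ_apply]
  exact ⟨existsUnique_forall_inner_add_eq lipschitz_Φ (by exact_mod_cast hεL) F,
    fun u hu ↦ norm_le_div_of_forall_inner_add_eq (lipschitz_Φ.norm_le_mul Φ_zero u) hεL hu⟩

/-- Well-posedness of the nonlinearly perturbed problem: there exists a unique `u ∈ V` with
`a(u, v) + ε ⟨N(G u), G v⟩ = F(v)` for all `v ∈ V`, and this solution satisfies
`‖u‖_a ≤ ‖F‖_{-a} / (1 − εL)`, where `‖F‖_{-a}` is the dual (operator) norm of `F`. Here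
`a(·,·)` is the inner product of `V` and `‖·‖_a` its induced norm. -/
theorem perturbed_hodge_laplacian_well_posed
    {V W : Type*}
    [NormedAddCommGroup V] [InnerProductSpace ℝ V] [FiniteDimensional ℝ V]
    [NormedAddCommGroup W] [InnerProductSpace ℝ W] [FiniteDimensional ℝ W]
    (G : V →ₗ[ℝ] W) (hG : ∀ v : V, ‖G v‖ ≤ ‖v‖)
    (N : W → W) (L : ℝ) (hL : 0 ≤ L)
    (hNLip : ∀ w1 w2 : W, ‖N w1 - N w2‖ ≤ L * ‖w1 - w2‖)
    (hN0 : N 0 = 0)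
    (ε : ℝ) (hε : 0 ≤ ε) (hεL : ε * L < 1)
    (F : V →L[ℝ] ℝ) :
    (∃! u : V, ∀ v : V, ⟪u, v⟫ + ε * ⟪N (G u), G v⟫ = F v) ∧
    (∀ u : V, (∀ v : V, ⟪u, v⟫ + ε * ⟪N (G u), G v⟫ = F v) →
      ‖u‖ ≤ ‖F‖ / (1 - ε * L)) := by
  have : CompleteSpace V := FiniteDimensional.complete ℝ V
  simpa only [Real.norm_of_nonneg hε] using perturbed_hodge_laplacian_well_posed_general G hG N L hL
    hNLip hN0 ε (by rwa [Real.norm_of_nonneg hε]) F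
end
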